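/- arXiv:2409.01430 — 7 statements merged into one kernel-verified Lean document; each statement's English description precedes it below -/
import Mathlib

section
/- For every infinite set E there exists an ℵ₀-independent family {A_i : i ∈ I} of subsets of E with card(I) = 2^{card E}. -/
/-- A family `S` of subsets of `E` is ℵ₀-independent: for every finite
subfamily, split into a part `T₀` taken as is and a disjoint part `T₁` taken
complemented (this encodes a finite index set `J` and `f : J → {0,1}`), the
corresponding intersection is nonempty. -/
def Aleph0Independent (E : Type) (S : Set (Set E)) : Prop :=
  ∀ T₀ T₁ : Set (Set E), T₀ ⊆ S → T₁ ⊆ S → T₀.Finite → T₁.Finite →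
    Disjoint T₀ T₁ → ((⋂ A ∈ T₀, A) ∩ ⋂ A ∈ T₁, Aᶜ).Nonempty

/-!
Hausdorff's construction. An infinite set `E` is equinumerous with the set of pairs `(F, G)`, where
`F` is a finite subset of `E` and `G` is a finite set of finite subsets of `E`. Attach to each
`B ⊆ E` the set of pairs with `F ∩ B ∈ G`. Finitely many subsets of `E` have pairwise distinct
traces on a suitable finite `F`, and on such an `F` the set `G` can prescribe which of them are
accepted.
-/

open Cardinal Filter Set

universe u

variable {α β ι : Type*}

/-- An indexed family of sets is (ℵ₀-)independent if all its finite Boolean combinations are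
nonempty. The disjoint finite sets `J` and `K` hold the indices of the sets taken as they are and of
those taken complemented, respectively. -/
def IsIndependentFamily (A : ι → Set α) : Prop :=
  ∀ J K : Finset ι, Disjoint J K → ((⋂ i ∈ J, A i) ∩ ⋂ i ∈ K, (A i)ᶜ).Nonempty

namespace IsIndependentFamily

variable {A : ι → Set α}

theorem injective (hA : IsIndependentFamily A) : Function.Injective A := by
  intro i j hij
  by_contra hne
  obtain ⟨x, hxi, hxj⟩ := hA {i} {j} (Finset.disjoint_singleton.2 hne)
  simp only [Finset.mem_singleton, iInter_iInter_eq_left] at hxi hxj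
  exact hxj (hij ▸ hxi)

theorem preimage (hA : IsIndependentFamily A) {f : β → α} (hf : Function.Surjective f) :
    IsIndependentFamily fun i => f ⁻¹' A i := by
  intro J K hJK
  simpa only [preimage_inter, preimage_iInter, preimage_compl] using (hA J K hJK).preimage hf

theorem aleph0Independent_range {E : Type} {A : ι → Set E} (hA : IsIndependentFamily A) :
    Aleph0Independent E (range A) := by
  intro T₀ T₁ hT₀ hT₁ hfin₀ hfin₁ hdisj
  obtain ⟨J, rfl⟩ := subset_range_iff_exists_image_eq.1 hT₀
  obtain ⟨K, rfl⟩ := subset_range_iff_exists_image_eq.1 hT₁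
  lift J to Finset ι using hfin₀.of_finite_image hA.injective.injOn
  lift K to Finset ι using hfin₁.of_finite_image hA.injective.injOn
  have hJK : Disjoint J K := Finset.disjoint_coe.1 ((disjoint_image_iff hA.injective).1 hdisj)
  simpa only [biInter_image, Finset.mem_coe] using hA J K hJK

end IsIndependentFamily

open scoped Classical in
theorem eventually_injOn_filter_mem (𝓑 : Finset (Set α)) :
    ∀ᶠ F : Finset α in atTop, InjOn (fun B : Set α => F.filter (· ∈ B)) 𝓑 := by
  refine (eventually_all_finset 𝓑).2 fun B _ => (eventually_all_finset 𝓑).2 fun C _ => ?_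
  by_cases hBC : B = C
  · exact .of_forall fun _ _ => hBC
  · obtain ⟨x, hx⟩ : ∃ x, ¬(x ∈ B ↔ x ∈ C) := by simpa only [Set.ext_iff, not_forall] using hBC
    filter_upwards [eventually_ge_atTop {x}] with F hxF htrace
    have hx_mem_iff : x ∈ B ↔ x ∈ C := by
      simpa only [Finset.mem_filter, Finset.singleton_subset_iff.1 hxF, true_and]
        using Finset.ext_iff.1 htrace x
    exact absurd hx_mem_iff hx

open scoped Classical in
/-- Hausdorff's family of sets of pairs `(F, G)`, indexed by the subsets of `α`: the pair belongs to
the set with index `B` when the trace of `B` on `F` is one of the members of `G`. -/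
def hausdorffFamily (B : Set α) : Set (Finset α × Finset (Finset α)) :=
  {p | p.1.filter (· ∈ B) ∈ p.2}

theorem isIndependentFamily_hausdorffFamily :
    IsIndependentFamily (hausdorffFamily (α := α)) := by
  classical
  intro J K hJK
  obtain ⟨F, hF⟩ := (eventually_injOn_filter_mem (J ∪ K)).exists
  refine ⟨(F, J.image fun B => F.filter (· ∈ B)), mem_iInter₂.2 fun B hB => ?_,
    mem_iInter₂.2 fun C hC hmem => ?_⟩
  · exact Finset.mem_image.2 ⟨B, hB, rfl⟩
  · obtain ⟨B, hB, hBC⟩ := Finset.mem_image.1 hmem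
    have hBC : B = C := hF (Finset.mem_union_left K hB) (Finset.mem_union_right J hC) hBC
    exact Finset.disjoint_left.1 hJK hB (hBC ▸ hC)

theorem mk_finset_prod_finset_finset_of_infinite (α : Type u) [Infinite α] :
    #(Finset α × Finset (Finset α)) = #α := by
  rw [mk_prod, lift_id, lift_id, mk_finset_of_infinite, mk_finset_of_infinite,
    mk_finset_of_infinite, mul_eq_self (aleph0_le_mk α)]

theorem exists_aleph0_independent_family_general (E : Type u) [Infinite E] :
    ∃ (ι : Type u) (A : ι → Set E), #ι = 2 ^ #E ∧ IsIndependentFamily A := by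
  obtain ⟨e⟩ := Cardinal.eq.1 (mk_finset_prod_finset_finset_of_infinite E)
  exact ⟨Set E, fun B => e.symm ⁻¹' hausdorffFamily B, mk_set,
    isIndependentFamily_hausdorffFamily.preimage e.symm.surjective⟩

theorem exists_aleph0_independent_family (E : Type) [Infinite E] :
    ∃ S : Set (Set E), Cardinal.mk ↥S = 2 ^ Cardinal.mk E ∧
      Aleph0Independent E S := by
  obtain ⟨ι, A, hι, hA⟩ := exists_aleph0_independent_family_general E
  exact ⟨range A, (mk_range_eq A hA.injective).trans hι, hA.aleph0Independent_range⟩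
end

section
/- For every set E with card(E) = ℵ₁ there exists an Ulam (ℵ₀, ℵ₁)-matrix over E. -/
/-!
Rank the points of `E` by distinct ordinals below `ω₁`. Every initial segment of `ω₁` is countable,
so each point `x` can injectively label the ordinals up to its rank by natural numbers. Put `x` in
the entry `(ξ, ζ)` when `x` labels `ζ` by `ξ`: the column `ζ` then misses only the countably many
points of rank below `ζ`, and `x` lies in at most one entry of the row `ξ` since its labels are
distinct. The same works with any infinite cardinal `κ` and `κ⁺` in place of `ℵ₀` and `ℵ₁`.
-/

open Cardinal Function Order Set

universe u v w

section UlamMatrix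

variable {ι : Type u} {E : Type v} {α : Type w}

/-- An Ulam matrix over `E` with rows indexed by `ι` and columns indexed by `α`: each column covers
all but at most `#ι` points of `E`, and the sets in each row are pairwise disjoint. For `#ι = κ` and
`#α = κ⁺` this is an Ulam `(κ, κ⁺)`-matrix; no well-order of the index types is involved. -/
structure IsUlamMatrix (F : ι → α → Set E) : Prop where
  mk_compl_iUnion_le (ζ : α) : lift.{u} #↥(⋃ ξ, F ξ ζ)ᶜ ≤ lift.{v} #ι
  pairwise_disjoint (ξ : ι) : Pairwise (Disjoint on F ξ)

theorem IsUlamMatrix.comp_injective {F : ι → α → Set E} (hF : IsUlamMatrix F) {β : Type*}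
    {s : β → α} (hs : Injective s) : IsUlamMatrix fun ξ ζ ↦ F ξ (s ζ) where
  mk_compl_iUnion_le ζ := hF.mk_compl_iUnion_le (s ζ)
  pairwise_disjoint ξ := (hF.pairwise_disjoint ξ).comp_of_injective hs

variable [LinearOrder α]

/-- The matrix of Ulam's construction, obtained from a ranking `r` of the points of `E` and a
labelling `f a` of each initial segment `Iic a` by row indices: the point `x` lies in the entry
`(ξ, ζ)` when `ξ` is the label of `ζ` in the initial segment up to `r x`. -/
def ulamMatrix (r : E → α) (f : ∀ a : α, Iic a → ι) (ξ : ι) (ζ : α) : Set E :=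
  {x | ∃ h : ζ ≤ r x, f (r x) ⟨ζ, h⟩ = ξ}

theorem iUnion_ulamMatrix (r : E → α) (f : ∀ a : α, Iic a → ι) (ζ : α) :
    ⋃ ξ, ulamMatrix r f ξ ζ = r ⁻¹' Ici ζ := by
  ext x
  simp [ulamMatrix]

theorem pairwise_disjoint_ulamMatrix (r : E → α) {f : ∀ a : α, Iic a → ι}
    (hf : ∀ a, Injective (f a)) (ξ : ι) : Pairwise (Disjoint on ulamMatrix r f ξ) := by
  intro ζ ζ' hne
  refine Set.disjoint_left.2 ?_
  rintro x ⟨_, hζ⟩ ⟨_, hζ'⟩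
  exact hne (congrArg Subtype.val (hf (r x) (hζ.trans hζ'.symm)))

theorem isUlamMatrix_ulamMatrix {r : E → α} (hr : Injective r) {f : ∀ a : α, Iic a → ι}
    (hf : ∀ a, Injective (f a)) : IsUlamMatrix (ulamMatrix r f) where
  mk_compl_iUnion_le ζ := by
    rw [iUnion_ulamMatrix, ← preimage_compl, compl_Ici]
    have label_injective : Injective fun x : r ⁻¹' Iio ζ ↦ f ζ ⟨r x, le_of_lt x.2⟩ :=
      fun _ _ hxy ↦ Subtype.ext (hr (congrArg Subtype.val (hf ζ hxy)))
    exact lift_mk_le_lift_mk_of_injective label_injective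
  pairwise_disjoint := pairwise_disjoint_ulamMatrix r hf

end UlamMatrix

theorem mk_Iic_toType_ord_succ_le {κ : Cardinal.{u}} (hκ : ℵ₀ ≤ κ) (a : (succ κ).ord.ToType) :
    #(Iic a) ≤ κ := by
  have mk_Iic_lt_succ : #(Iic a) < #(succ κ).ord.ToType :=
    mk_Iic_lt a (by simp) (by simpa using hκ.trans (le_succ κ))
  rwa [mk_ord_toType, lt_succ_iff] at mk_Iic_lt_succ

theorem exists_ulam_matrix_general {ι : Type u} {E : Type v} {α : Type w} [Infinite ι]
    (hα : lift.{u} #α ≤ lift.{w} (succ #ι)) (hE : lift.{u} #E ≤ lift.{v} (succ #ι)) :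
    ∃ F : ι → α → Set E, IsUlamMatrix F := by
  rw [← mk_ord_toType (succ #ι)] at hα hE
  obtain ⟨s⟩ := lift_mk_le'.1 hα
  obtain ⟨r⟩ := lift_mk_le'.1 hE
  obtain ⟨f⟩ : Nonempty (∀ a : (succ #ι).ord.ToType, Iic a ↪ ι) :=
    Classical.nonempty_pi.2 fun a ↦ mk_Iic_toType_ord_succ_le (aleph0_le_mk ι) a
  have hF := isUlamMatrix_ulamMatrix r.injective fun a ↦ (f a).injective
  exact ⟨_, hF.comp_injective s.injective⟩

/-- For every set `E` of cardinality `ℵ₁` there is an Ulam `(ℵ₀, ℵ₁)`-matrix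
`(E_{ξ,ζ})_{ξ<ℵ₀, ζ<ℵ₁}` over `E`: the rows `ξ` are indexed by `ℕ` and the
columns `ζ` by the ordinals below `ω₁`. -/
theorem exists_ulam_matrix (E : Type) (hE : Cardinal.mk E = Cardinal.aleph 1) :
    ∃ F : ℕ → {o : Ordinal // o < (Cardinal.aleph 1).ord} → Set E,
      (∀ ζ, Cardinal.mk ↥(Set.univ \ ⋃ ξ : ℕ, F ξ ζ) ≤ Cardinal.aleph0) ∧
      (∀ (ξ : ℕ) ζ ζ', ζ ≠ ζ' → F ξ ζ ∩ F ξ ζ' = ∅) := by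
  have mk_columns : #{o : Ordinal // o < (aleph 1).ord} = aleph 1 :=
    (mk_Iio_ordinal (aleph 1).ord).trans (by simp)
  obtain ⟨F, hF⟩ : ∃ F : ℕ → {o : Ordinal // o < (aleph 1).ord} → Set E, IsUlamMatrix F :=
    exists_ulam_matrix_general (by rw [mk_columns]; simp) (by simp [hE])
  refine ⟨F, fun ζ ↦ ?_, fun ξ ζ ζ' hne ↦ (hF.pairwise_disjoint ξ hne).inter_eq⟩
  simpa [compl_eq_univ_sdiff] using hF.mk_compl_iUnion_le ζ
end

section
/- Let X be a set and let I be a σ-ideal of subsets of X containing all countable subsets of X. Let (O_α)_{α<ω₁} be a family of pairwise disjoint countable subsets of X such that ⋃_{α<ω₁} O_α ∉ I, and let (Π_{ξ,ζ})_{ξ<ℵ₀, ζ<ℵ₁} be an Ulam (ℵ₀, ℵ₁)-matrix over ω₁. Then there exist ξ₀ < ℵ₀ and a set Θ ⊆ ω₁ with card(Θ) = ℵ₁ such that for every ζ ∈ Θ the set ⋃_{γ ∈ Π_{ξ₀,ζ}} O_γ does not belong to I; moreover, for any two distinct ζ, ζ' ∈ Θ the sets ⋃_{γ ∈ Π_{ξ₀,ζ}}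 O_γ and ⋃_{γ ∈ Π_{ξ₀,ζ'}} O_γ are disjoint. -/
/-- Ordinals below `ω₁`, i.e. the countable ordinals. -/
abbrev Omega1 : Type 1 := {o : Ordinal // o < (Cardinal.aleph 1).ord}

/-!
Fix a column of the matrix. If the union of the `O γ` over each of its entries lay in `I`, then
`⋃ γ, O γ` would be a countable union of members of `I`: these unions, and the `O γ` for the
countably many `γ` which the column misses. So every column has an entry whose union is not in `I`.
Choosing one maps the columns to countably many rows, and as the number of columns has uncountable
cofinality, some row is chosen by as many columns as there are.
-/

open Cardinal Set Function

universe u v w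

theorem exists_biUnion_notMem_of_countable_compl {X : Type u} {I : Set (Set X)}
    (hI : CountableSupClosed I) {ι : Type v} {O : ι → Set X} (hO : ∀ γ, O γ ∈ I)
    (hO_big : ⋃ γ, O γ ∉ I) {Ξ : Type w} [Countable Ξ] [Nonempty Ξ] {P : Ξ → Set ι}
    (hP : (⋃ ξ, P ξ)ᶜ.Countable) : ∃ ξ, ⋃ γ ∈ P ξ, O γ ∉ I := by
  by_contra! h_small
  have := hP.to_subtype
  let piece : Ξ ⊕ ↥(⋃ ξ, P ξ)ᶜ → Set X := Sum.elim (fun ξ => ⋃ γ ∈ P ξ, O γ) (fun γ => O γ)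
  have h_piece : ∀ i, piece i ∈ I := Sum.forall.2 ⟨h_small, fun γ => hO γ⟩
  have h_union : ⋃ γ, O γ = ⋃ i, piece i := calc
    ⋃ γ, O γ = (⋃ γ ∈ ⋃ ξ, P ξ, O γ) ∪ ⋃ γ ∈ (⋃ ξ, P ξ)ᶜ, O γ := by
      rw [← biUnion_union, union_compl_self, biUnion_univ]
    _ = (⋃ ξ, ⋃ γ ∈ P ξ, O γ) ∪ ⋃ γ : ↥(⋃ ξ, P ξ)ᶜ, O γ := by
      rw [biUnion_iUnion, biUnion_eq_iUnion (⋃ ξ, P ξ)ᶜ]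
    _ = ⋃ i, piece i := (iSup_sum (f := piece)).symm
  exact hO_big (h_union ▸ hI.iSup_mem h_piece)

/-- An Ulam matrix of subsets of `ι`, with rows indexed by `Ξ` and columns by `κ`: every column
covers all but countably many points, and every row consists of pairwise disjoint sets. An Ulam
`(ℵ₀, ℵ₁)`-matrix is the case `#Ξ = ℵ₀` and `#ι = #κ = ℵ₁`. -/
structure IsUlamMatrix_s4 {ι : Type u} {Ξ : Type v} {κ : Type w} (P : Ξ → κ → Set ι) : Prop where
  countable_compl_iUnion : ∀ ζ, (⋃ ξ, P ξ ζ)ᶜ.Countable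
  pairwise_disjoint : ∀ ξ, Pairwise (Disjoint on P ξ)

theorem disjoint_biUnion_of_pairwise_disjoint {X : Type u} {ι : Type v} {O : ι → Set X}
    (hO : Pairwise (Disjoint on O)) {s t : Set ι} (hst : Disjoint s t) :
    Disjoint (⋃ γ ∈ s, O γ) (⋃ γ ∈ t, O γ) := by
  simp only [disjoint_iUnion_left, disjoint_iUnion_right]
  exact fun δ hδ γ hγ => hO (hst.ne_of_mem hγ hδ)

theorem exists_mk_preimage_singleton_eq_of_countable {β : Type u} {α : Type v} [Countable α]
    (f : β → α) (hβ : ℵ₀ < (#β).ord.cof) : ∃ a, #(f ⁻¹' {a}) = #β := by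
  have := Countable.of_equiv α (equivShrink.{u} α)
  have h_cof : #(Shrink.{u} α) < (#β).ord.cof := mk_le_aleph0.trans_lt hβ
  obtain ⟨a, ha⟩ :=
    infinite_pigeonhole (equivShrink.{u} α ∘ f) (hβ.le.trans (Ordinal.cof_ord_le _)) h_cof
  refine ⟨(equivShrink.{u} α).symm a, ?_⟩
  rwa [preimage_comp, ← (equivShrink.{u} α).image_symm_eq_preimage, image_singleton] at ha

theorem ulam_pigeonhole_general {X : Type*} {ι : Type*} {Ξ : Type*} {κ : Type*}
    [Countable Ξ] [Nonempty Ξ] (hκ : ℵ₀ < (#κ).ord.cof) {I : Set (Set X)}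
    (hI : CountableSupClosed I) {O : ι → Set X} (hO : ∀ γ, O γ ∈ I)
    (hO_disj : Pairwise (Disjoint on O)) (hO_big : ⋃ γ, O γ ∉ I)
    {P : Ξ → κ → Set ι} (hP : IsUlamMatrix_s4 P) :
    ∃ ξ₀, ∃ Θ : Set κ, #Θ = #κ ∧ (∀ ζ ∈ Θ, ⋃ γ ∈ P ξ₀ ζ, O γ ∉ I) ∧
      Θ.PairwiseDisjoint fun ζ => ⋃ γ ∈ P ξ₀ ζ, O γ := by
  have h_big_entry : ∀ ζ, ∃ ξ, ⋃ γ ∈ P ξ ζ, O γ ∉ I := fun ζ =>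
    exists_biUnion_notMem_of_countable_compl hI hO hO_big (hP.countable_compl_iUnion ζ)
  choose f hf using h_big_entry
  obtain ⟨ξ₀, h_fiber⟩ := exists_mk_preimage_singleton_eq_of_countable f hκ
  refine ⟨ξ₀, f ⁻¹' {ξ₀}, h_fiber, ?_, ?_⟩
  · rintro ζ rfl
    exact hf ζ
  · exact fun ζ _ ζ' _ hne =>
      disjoint_biUnion_of_pairwise_disjoint hO_disj (hP.pairwise_disjoint ξ₀ hne)

theorem mk_omega1 : #Omega1 = ℵ₁ :=
  (mk_Iio_ordinal (ℵ₁ : Cardinal.{0}).ord).trans (by simp)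

theorem ulam_pigeonhole
    (X : Type) (I : Set (Set X))
    -- `I` is a σ-ideal containing all countable sets:
    (hdown : ∀ s t : Set X, s ⊆ t → t ∈ I → s ∈ I)
    (hunion : ∀ f : ℕ → Set X, (∀ n, f n ∈ I) → (⋃ n, f n) ∈ I)
    (hcount : ∀ s : Set X, s.Countable → s ∈ I)
    -- `(O_α)_{α<ω₁}` pairwise disjoint countable sets with abundant union:
    (O : Omega1 → Set X)
    (hOcnt : ∀ α, (O α).Countable)
    (hOdisj : ∀ α β : Omega1, α ≠ β → Disjoint (O α) (O β))
    (hObig : (⋃ α, O α) ∉ I)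
    -- `(P_{ξ,ζ})` an Ulam (ℵ₀, ℵ₁)-matrix over `ω₁`:
    (P : ℕ → Omega1 → Set Omega1)
    (hP1 : ∀ ζ, Cardinal.mk ↥(Set.univ \ ⋃ ξ : ℕ, P ξ ζ) ≤ Cardinal.aleph0)
    (hP2 : ∀ (ξ : ℕ) (ζ ζ' : Omega1), ζ ≠ ζ' → P ξ ζ ∩ P ξ ζ' = ∅) :
    ∃ ξ₀ : ℕ, ∃ Θ : Set Omega1, Cardinal.mk ↥Θ = Cardinal.aleph 1 ∧
      (∀ ζ ∈ Θ, (⋃ γ ∈ P ξ₀ ζ, O γ) ∉ I) ∧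
      (∀ ζ ∈ Θ, ∀ ζ' ∈ Θ, ζ ≠ ζ' →
        (⋃ γ ∈ P ξ₀ ζ, O γ) ∩ (⋃ γ ∈ P ξ₀ ζ', O γ) = ∅) := by
  have h_cof : ℵ₀ < (#Omega1).ord.cof := by
    rw [mk_omega1, isRegular_aleph_one.cof_ord]
    exact aleph0_lt_aleph_one
  have hP : IsUlamMatrix_s4 P :=
    ⟨fun ζ => compl_eq_univ_sdiff (⋃ ξ, P ξ ζ) ▸ le_aleph0_iff_set_countable.1 (hP1 ζ),
      fun ξ ζ ζ' hne => disjoint_iff_inter_eq_empty.2 (hP2 ξ ζ ζ' hne)⟩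
  simpa only [mk_omega1, PairwiseDisjoint, Set.Pairwise, onFun, disjoint_iff_inter_eq_empty] using
    ulam_pigeonhole_general h_cof (.of_iSup_mem hunion) (fun α => hcount _ (hOcnt α))
      hOdisj hObig hP
end

section
/- Assume the continuum hypothesis (2^ℵ₀ = ℵ₁). Then there exists a family {A_i : i ∈ I} of subsets of ℝ with card(I) = 2^{ℵ₁} such that: (1) each A_i is a Luzin set and does not have the Baire property; (2) for every i ∈ I and every x ∈ ℝ, the translate A_i + x is a Luzin set; and (3) for every J ⊆ I with card(J) ≤ ℵ₀ and every function f : J → {0,1}, the complement in ℝ of ⋂_{j∈J} A_j^{f(j)} contains no nonmeager set having the Baire property; in particular ⋂_{j∈J} A_j^{f(j)} meets every nonmeager subset of ℝ having the Baire property. -/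
/-- `B` has the Baire property: `B = U △ M` for some open `U` and meager `M`. -/
def HasBaireProp (B : Set ℝ) : Prop :=
  ∃ U M : Set ℝ, IsOpen U ∧ IsMeagre M ∧ B = symmDiff U M

/-- `A` is a Luzin set: uncountable with countable intersection with every meager set. -/
def IsLuzin (A : Set ℝ) : Prop :=
  ¬A.Countable ∧ ∀ M : Set ℝ, IsMeagre M → (A ∩ M).Countable

/-!
Under CH, Luzin's transfinite recursion enumerates the triples `(V, G, s)`, where `V` is a basic
open set, `G` a dense `Gδ` set and `s` a point of a fixed set `S` of size continuum, in order
type `ω₁`, and picks distinct points `x (V, G, s) ∈ V ∩ G` lying in every dense `Gδ` set that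
occurs earlier. Hence only countably many of these points fall into a given meagre set. On `S`
there is an independent family of `2 ^ 𝔠` sets in Hausdorff's sense: every countable Boolean
combination of its members is nonempty. Each member `T` yields the Luzin set of all points
`x (V, G, s)` with `s ∈ T`. Since every `V ∩ G` contains a point with any prescribed third index,
each countable Boolean combination of these Luzin sets is nonmeagre in every nonempty open set.
-/

open Set Filter Cardinal

universe u v w

section CountableIndependence

variable {α : Type v}

variable (α) in
/-- The ground set of Hausdorff's independent family on `Set α`: a code `(e, T)` accepts
those `Y : Set α` whose trace `e ⁻¹' Y` along the sequence `e` lies in `T`. -/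
abbrev TraceCode : Type v :=
  (ℕ → α) × {T : Set (Set ℕ) // T.Countable}

/-- The member of Hausdorff's independent family with index `Y`: the codes accepting `Y`. -/
def traceCodeSet (Y : Set α) : Set (TraceCode α) :=
  {s | s.1 ⁻¹' Y ∈ s.2.1}

theorem exists_seq_injOn_preimage [Nonempty α] {J : Set (Set α)} (hJ : J.Countable) :
    ∃ e : ℕ → α, InjOn (e ⁻¹' ·) J := by
  have separate (p : Set α × Set α) : ∃ y, (y ∈ p.1 ↔ y ∈ p.2) → p.1 = p.2 := by
    by_contra! h
    obtain ⟨y⟩ := ‹Nonempty α›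
    exact (h y).2 (Set.ext fun z => (h z).1)
  choose d hd using separate
  obtain rfl | ⟨Y₀, hY₀⟩ := J.eq_empty_or_nonempty
  · exact ⟨fun _ => Classical.arbitrary α, injOn_empty _⟩
  obtain ⟨e, he⟩ := ((hJ.prod hJ).image d).exists_eq_range ⟨_, (Y₀, Y₀), ⟨hY₀, hY₀⟩, rfl⟩
  refine ⟨e, fun Y hY Z hZ hYZ => hd (Y, Z) ?_⟩
  obtain ⟨n, hn⟩ : d (Y, Z) ∈ range e := he ▸ mem_image_of_mem d ⟨hY, hZ⟩
  rw [← hn]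
  exact Set.ext_iff.1 hYZ n

theorem exists_forall_mem_traceCodeSet_iff [Nonempty α] {J : Set (Set α)} (hJ : J.Countable)
    (K : Set (Set α)) : ∃ s : TraceCode α, ∀ Y ∈ J, s ∈ traceCodeSet Y ↔ Y ∈ K := by
  obtain ⟨e, he⟩ := exists_seq_injOn_preimage hJ
  refine ⟨(e, ⟨(e ⁻¹' ·) '' (J ∩ K), (hJ.mono inter_subset_left).image _⟩), fun Y hY => ?_⟩
  calc e ⁻¹' Y ∈ (e ⁻¹' ·) '' (J ∩ K) ↔ Y ∈ J ∩ K := he.mem_image_iff inter_subset_left hY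
    _ ↔ Y ∈ K := and_iff_right hY

theorem mk_traceCode_le_continuum (hα : #α ≤ 𝔠) : #(TraceCode α) ≤ 𝔠 := by
  have hseq : #(ℕ → α) ≤ 𝔠 := by
    simpa using power_le_power_right (c := ℵ₀) hα
  have hfam : #{T : Set (Set ℕ) // T.Countable} ≤ 𝔠 := by
    simpa [le_aleph0_iff_set_countable, aleph0_le_continuum] using mk_bounded_set_le (Set ℕ) ℵ₀
  rw [mk_prod]
  exact mul_le_of_le aleph0_le_continuum (by simpa using hseq) (by simpa using hfam)

end CountableIndependence

section TransfiniteChoice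

variable {X : Type u} {W : Type w} {l : Filter X} [CountableInterFilter l]

theorem exists_linearOrder_forall_countable_Iio (hW : #W ≤ ℵ₁) :
    ∃ (_ : LinearOrder W) (_ : WellFoundedLT W), ∀ w : W, (Iio w).Countable := by
  obtain ⟨_, _, hord⟩ := exists_ord_eq_type_lt W
  refine ⟨inferInstance, inferInstance, fun w => ?_⟩
  exact le_aleph0_iff_set_countable.1 (lt_aleph_one_iff.1 ((mk_Iio_lt w hord).trans_le hW))

theorem exists_forall_mem_and_forall_lt_mem_ne [LinearOrder W] [WellFoundedLT W]
    (hW : ∀ w : W, (Iio w).Countable) (hl : l ≤ cofinite) {B S : W → Set X}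
    (hB : ∀ w, ∃ᶠ y in l, y ∈ B w) (hS : ∀ w, S w ∈ l) :
    ∃ x : W → X, ∀ w, x w ∈ B w ∧ ∀ v < w, x w ∈ S v ∧ x w ≠ x v := by
  have step (w : W) (x : ∀ v, v < w → X) :
      ∃ y, y ∈ B w ∧ ∀ v (hv : v < w), y ∈ S v ∧ y ≠ x v hv := by
    have avoid : ∀ᶠ y in l, ∀ v (hv : v ∈ Iio w), y ∈ S v ∧ y ≠ x v hv :=
      (eventually_countable_ball (hW w)).2 fun v hv =>
        Eventually.and (hS v) (hl (eventually_cofinite_ne (x v hv)))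
    exact ((hB w).and_eventually avoid).exists
  choose F hF using step
  refine ⟨wellFounded_lt.fix F, fun w => ?_⟩
  rw [wellFounded_lt.fix_eq F w]
  exact hF w _

theorem exists_injective_tendsto_cocountable (hW : #W ≤ ℵ₁) (hl : l ≤ cofinite)
    {B S : W → Set X} (hB : ∀ w, ∃ᶠ y in l, y ∈ B w) (hS : l.HasBasis (fun _ => True) S) :
    ∃ x : W → X, Function.Injective x ∧ (∀ w, x w ∈ B w) ∧ Tendsto x cocountable l := by
  obtain ⟨_, _, hIio⟩ := exists_linearOrder_forall_countable_Iio hW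
  obtain ⟨x, hx⟩ := exists_forall_mem_and_forall_lt_mem_ne hIio hl hB
    fun w => hS.mem_of_mem trivial
  refine ⟨x, Function.Injective.of_lt_imp_ne fun v w hvw => ((hx w).2 v hvw).2.symm,
    fun w => (hx w).1, hS.tendsto_right_iff.2 fun v _ => mem_cocountable.2 ?_⟩
  have late : {w | x w ∈ S v}ᶜ ⊆ Iic v := fun w hw =>
    not_lt.1 fun hvw => hw ((hx w).2 v hvw).1
  exact ((hIio v).insert v).mono (late.trans (Iio_insert (a := v)).ge)

theorem exists_independent_family_of_hasBasis {α : Type v} [Nonempty α] (hα : #α ≤ 𝔠)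
    (CH : (𝔠 : Cardinal.{max u v}) = ℵ₁) (hl : l ≤ cofinite) {𝒢 𝒰 : Set (Set X)}
    (h𝒢 : #𝒢 ≤ 𝔠) (hbasis : l.HasBasis (· ∈ 𝒢) id) (h𝒰 : #𝒰 ≤ 𝔠) (hne : 𝒰.Nonempty)
    (hfreq : ∀ U ∈ 𝒰, ∃ᶠ y in l, y ∈ U) :
    ∃ A : Set α → Set X, (∀ Y, ∀ t ∈ l, (A Y \ t).Countable) ∧
      ∀ J : Set (Set α), J.Countable → ∀ K : Set (Set α), ∀ U ∈ 𝒰,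
        ∃ᶠ y in l, y ∈ U ∧ ∀ Y ∈ J, (y ∈ A Y ↔ Y ∈ K) := by
  have hcard : #(𝒰 × 𝒢 × TraceCode α) ≤ ℵ₁ := by
    rw [← CH, mk_prod, mk_prod 𝒢]
    have hcode := mk_traceCode_le_continuum hα
    exact mul_le_of_le aleph0_le_continuum (lift_le_continuum.2 h𝒰) <| lift_le_continuum.2 <|
      mul_le_of_le aleph0_le_continuum (lift_le_continuum.2 h𝒢) (lift_le_continuum.2 hcode)
  have hB (w : 𝒰 × 𝒢 × TraceCode α) : ∃ᶠ y in l, y ∈ (w.1 ∩ w.2.1 : Set X) :=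
    (hfreq w.1 w.1.2).and_eventually (hbasis.mem_of_mem w.2.1.2)
  have hS : l.HasBasis (fun _ => True) fun w : 𝒰 × 𝒢 × TraceCode α => (w.2.1 : Set X) := by
    obtain ⟨U, hU⟩ := hne
    obtain ⟨s, -⟩ := exists_forall_mem_traceCodeSet_iff (α := α) countable_empty ∅
    exact hbasis.to_hasBasis (fun G hG => ⟨(⟨U, hU⟩, ⟨G, hG⟩, s), trivial, subset_rfl⟩)
      fun w _ => ⟨w.2.1, w.2.1.2, subset_rfl⟩
  obtain ⟨x, hinj, hx, hlim⟩ := exists_injective_tendsto_cocountable hcard hl hB hS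
  refine ⟨fun Y => x '' {w | w.2.2 ∈ traceCodeSet Y}, fun Y t ht => ?_, fun J hJ K U hU => ?_⟩
  · refine ((mem_cocountable.1 (hlim ht)).image x).mono ?_
    rintro _ ⟨⟨w, -, rfl⟩, hwt⟩
    exact mem_image_of_mem x hwt
  · obtain ⟨s, hs⟩ := exists_forall_mem_traceCodeSet_iff hJ K
    refine hbasis.frequently_iff.2 fun {G} hG => ?_
    obtain ⟨hxU, hxG⟩ := hx (⟨U, hU⟩, ⟨G, hG⟩, s)
    exact ⟨_, hxG, hxU, fun Y hY => hinj.mem_set_image.trans (hs Y hY)⟩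

end TransfiniteChoice

section BaireCategory

variable {X : Type u} [TopologicalSpace X]

/-- Luzin sets in an arbitrary topological space; on `ℝ` this is `IsLuzin`. -/
def IsLuzinSet (A : Set X) : Prop :=
  ¬A.Countable ∧ ∀ M : Set X, IsMeagre M → (A ∩ M).Countable

theorem IsLuzinSet.image_homeomorph {Y : Type v} [TopologicalSpace Y] {A : Set X}
    (hA : IsLuzinSet A) (h : X ≃ₜ Y) : IsLuzinSet (h '' A) := by
  refine ⟨fun hc => hA.1 (countable_of_injective_of_countable_image h.injective.injOn hc),
    fun M hM => ?_⟩
  rw [← image_inter_preimage]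
  exact (hA.2 _ (hM.preimage_of_isOpenMap h.continuous h.isOpenMap)).image h

theorem residual_le_cofinite [T1Space X] [PerfectSpace X] : residual X ≤ cofinite :=
  le_cofinite_iff_compl_singleton_mem.2 fun x =>
    residual_of_dense_open isOpen_compl_singleton (dense_compl_singleton x)

theorem isMeagre_of_countable [T1Space X] [PerfectSpace X] {A : Set X} (hA : A.Countable) :
    IsMeagre A := by
  rw [← biUnion_of_singleton A]
  exact isMeagre_biUnion hA fun x _ => residual_le_cofinite (finite_singleton x).compl_mem_cofinite

theorem hasBasis_residual [BaireSpace X] :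
    (residual X).HasBasis (· ∈ {G : Set X | IsGδ G ∧ Dense G}) id :=
  ⟨fun s => by simp only [mem_residual, mem_ofPred_eq, id, and_comm, and_assoc]⟩

theorem mk_isGδ_le_continuum [SecondCountableTopology X] : #{G : Set X | IsGδ G} ≤ 𝔠 := by
  borelize X
  have hborel : ‹MeasurableSpace X› = .generateFrom (TopologicalSpace.countableBasis X) :=
    BorelSpace.measurable_eq.trans
      (TopologicalSpace.isBasis_countableBasis X).borel_eq_generateFrom
  refine (mk_le_mk_of_subset fun G hG => ?_).trans <|
    MeasurableSpace.cardinal_measurableSet_le_continuum <|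
      (TopologicalSpace.countable_countableBasis X).le_aleph0.trans aleph0_le_continuum
  exact hborel ▸ IsGδ.measurableSet hG

/-- A family of sets is category independent if each countable Boolean combination of its members
is nonmeagre in every nonempty open set. Here `J` holds the indices involved in the combination
and `K` selects those whose sets are not complemented. -/
def IsCategoryIndependent {ι : Type v} (A : ι → Set X) : Prop :=
  ∀ J : Set ι, J.Countable → ∀ (K : Set ι) (U : Set X), IsOpen U → U.Nonempty →
    ∃ᶠ y in residual X, y ∈ U ∧ ∀ i ∈ J, (y ∈ A i ↔ i ∈ K)

namespace IsCategoryIndependent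

variable {ι : Type v} {A : ι → Set X}

theorem exists_mem_forall_mem_iff (hA : IsCategoryIndependent A) {J : Set ι} (hJ : J.Countable)
    (K : Set ι) {B : Set X} (hB : BaireMeasurableSet B) (hBm : ¬IsMeagre B) :
    ∃ y ∈ B, ∀ i ∈ J, (y ∈ A i ↔ i ∈ K) := by
  obtain ⟨U, hU, hBU⟩ := hB.residualEq_isOpen
  have hUne : U.Nonempty := by
    have hfreq : ∃ᶠ y in residual X, y ∈ B := hBm
    obtain ⟨y, hyB, hy⟩ := (hfreq.and_eventually hBU.mem_iff).exists
    exact ⟨y, hy.1 hyB⟩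
  obtain ⟨y, ⟨hyU, hyJ⟩, hy⟩ := ((hA J hJ K U hU hUne).and_eventually hBU.mem_iff).exists
  exact ⟨y, hy.2 hyU, hyJ⟩

theorem nonempty_iInter_cond_inter (hA : IsCategoryIndependent A) {J : Set ι} (hJ : J.Countable)
    (f : J → Bool) {B : Set X} (hB : BaireMeasurableSet B) (hBm : ¬IsMeagre B) :
    ((⋂ j : J, cond (f j) (A j)ᶜ (A j)) ∩ B).Nonempty := by
  obtain ⟨y, hyB, hy⟩ :=
    hA.exists_mem_forall_mem_iff hJ {i | ∃ h : i ∈ J, f ⟨i, h⟩ = false} hB hBm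
  refine ⟨y, mem_iInter.2 fun j => ?_, hyB⟩
  have hyj := hy j j.2
  cases hj : f j <;> simpa [hj] using hyj

theorem not_isMeagre [Nonempty X] (hA : IsCategoryIndependent A) (i : ι) : ¬IsMeagre (A i) := by
  have hfreq := hA {i} (countable_singleton i) {i} univ isOpen_univ univ_nonempty
  exact hfreq.mono fun y hy => (hy.2 i rfl).2 rfl

theorem not_baireMeasurableSet [Nonempty X] (hA : IsCategoryIndependent A) (i : ι) :
    ¬BaireMeasurableSet (A i) := fun hB => by
  obtain ⟨y, hyA, hy⟩ :=
    hA.exists_mem_forall_mem_iff (countable_singleton i) ∅ hB (hA.not_isMeagre i)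
  exact (hy i rfl).1 hyA

theorem injective [Nonempty X] (hA : IsCategoryIndependent A) : Function.Injective A := by
  intro i j hij
  obtain ⟨y, -, hy⟩ :=
    (hA {i, j} (toFinite _).countable {i} univ isOpen_univ univ_nonempty).exists
  have hyi : y ∈ A i := (hy i (by simp)).2 rfl
  exact ((hy j (by simp)).1 (hij ▸ hyi)).symm

end IsCategoryIndependent

theorem exists_isCategoryIndependent [SecondCountableTopology X] [T1Space X] [PerfectSpace X]
    [BaireSpace X] [Nonempty X] {α : Type v} [Nonempty α] (hα : #α ≤ 𝔠)
    (CH : (𝔠 : Cardinal.{max u v}) = ℵ₁) :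
    ∃ A : Set α → Set X, IsCategoryIndependent A ∧ ∀ Y, IsLuzinSet (A Y) := by
  have hbasis := TopologicalSpace.isBasis_countableBasis X
  have hbasis_nonempty : (TopologicalSpace.countableBasis X).Nonempty :=
    (hbasis.exists_subset_of_mem_open (mem_univ (Classical.arbitrary X)) isOpen_univ).imp
      fun _ hV => hV.1
  obtain ⟨A, hctb, hind⟩ := exists_independent_family_of_hasBasis hα CH residual_le_cofinite
    ((mk_le_mk_of_subset fun _ hG => hG.1).trans mk_isGδ_le_continuum) hasBasis_residual
    ((TopologicalSpace.countable_countableBasis X).le_aleph0.trans aleph0_le_continuum)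
    hbasis_nonempty
    fun V hV => not_isMeagre_of_isOpen (hbasis.isOpen hV)
      (TopologicalSpace.nonempty_of_mem_countableBasis hV)
  have hA : IsCategoryIndependent A := fun J hJ K U hU hUne => by
    obtain ⟨y, hy⟩ := hUne
    obtain ⟨V, hV, -, hVU⟩ := hbasis.exists_subset_of_mem_open hy hU
    exact (hind J hJ K V hV).mono fun z hz => ⟨hVU hz.1, hz.2⟩
  refine ⟨A, hA, fun Y => ⟨fun hY => hA.not_isMeagre Y (isMeagre_of_countable hY), fun M hM => ?_⟩⟩
  simpa only [sdiff_compl] using hctb Y Mᶜ hM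

end BaireCategory

theorem continuum_eq_aleph_one_of_two_power_aleph0 (CH : (2 : Cardinal.{v}) ^ ℵ₀ = ℵ₁) :
    (𝔠 : Cardinal.{w}) = ℵ₁ := by
  rw [two_power_aleph0] at CH
  exact lift_injective.{v} (by simpa using congrArg lift.{w} CH)

theorem hasBaireProp_iff_baireMeasurableSet {B : Set ℝ} :
    HasBaireProp B ↔ BaireMeasurableSet B := by
  rw [BaireMeasurableSet.iff_residualEq_isOpen]
  refine exists_congr fun U => ⟨?_, fun ⟨hU, hBU⟩ => ⟨symmDiff U B, hU, ?_, ?_⟩⟩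
  · rintro ⟨M, hU, hM, rfl⟩
    exact ⟨hU, eventuallyEq_set.2 (mem_of_superset hM fun y hy => by simp_all [mem_symmDiff])⟩
  · exact mem_of_superset hBU.mem_iff fun y hy => by simp_all
  · exact (symmDiff_symmDiff_cancel_left U B).symm

theorem luzin_strictly_independent_family_general {X : Type u} [TopologicalSpace X]
    [SecondCountableTopology X] [T1Space X] [PerfectSpace X] [BaireSpace X] [Nonempty X]
    (CH : (2 : Cardinal.{v}) ^ ℵ₀ = ℵ₁) :
    ∃ (I : Type) (A : I → Set X), Function.Injective A ∧ #I = 2 ^ ℵ₁ ∧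
      (∀ i, IsLuzinSet (A i) ∧ ¬BaireMeasurableSet (A i)) ∧
      (∀ i, ∀ h : X ≃ₜ X, IsLuzinSet (h '' A i)) ∧
      (∀ J : Set I, #J ≤ ℵ₀ → ∀ f : J → Bool,
        (∀ B : Set X, B ⊆ (⋂ j : J, cond (f j) (A j)ᶜ (A j))ᶜ →
          BaireMeasurableSet B → IsMeagre B) ∧
        (∀ B : Set X, BaireMeasurableSet B → ¬IsMeagre B →
          ((⋂ j : J, cond (f j) (A j)ᶜ (A j)) ∩ B).Nonempty)) := by
  obtain ⟨A, hind, hluzin⟩ := exists_isCategoryIndependent (X := X) mk_real.le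
    (continuum_eq_aleph_one_of_two_power_aleph0 CH)
  have hmeets (J : Set (Set ℝ)) (hJ : #J ≤ ℵ₀) (f : J → Bool) (B : Set X) :
      BaireMeasurableSet B → ¬IsMeagre B → ((⋂ j : J, cond (f j) (A j)ᶜ (A j)) ∩ B).Nonempty :=
    hind.nonempty_iInter_cond_inter (le_aleph0_iff_set_countable.1 hJ) f
  refine ⟨Set ℝ, A, hind.injective, ?_, fun Y => ⟨hluzin Y, hind.not_baireMeasurableSet Y⟩,
    fun Y h => (hluzin Y).image_homeomorph h,
    fun J hJ f => ⟨fun B hsub hB => ?_, hmeets J hJ f⟩⟩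
  · rw [mk_set, mk_real, continuum_eq_aleph_one_of_two_power_aleph0 CH]
  · by_contra hBm
    obtain ⟨y, hy, hyB⟩ := hmeets J hJ f B hB hBm
    exact hsub hyB hy

theorem luzin_strictly_independent_family
    (CH : (2 : Cardinal) ^ Cardinal.aleph0 = Cardinal.aleph 1) :
    ∃ (I : Type) (A : I → Set ℝ), Function.Injective A ∧
      Cardinal.mk I = 2 ^ Cardinal.aleph 1 ∧
      (∀ i : I, IsLuzin (A i) ∧ ¬HasBaireProp (A i)) ∧
      (∀ i : I, ∀ x : ℝ, IsLuzin ((fun a => a + x) '' A i)) ∧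
      (∀ J : Set I, Cardinal.mk ↥J ≤ Cardinal.aleph0 → ∀ f : J → Bool,
        (∀ B : Set ℝ, B ⊆ (⋂ j : J, cond (f j) ((A j.1)ᶜ) (A j.1))ᶜ →
          HasBaireProp B → IsMeagre B) ∧
        (∀ B : Set ℝ, HasBaireProp B → ¬IsMeagre B →
          ((⋂ j : J, cond (f j) ((A j.1)ᶜ) (A j.1)) ∩ B).Nonempty)) := by
  obtain ⟨I, A, hinj, hcard, hluzin, himage, hind⟩ :=
    luzin_strictly_independent_family_general (X := ℝ) CH
  simp only [hasBaireProp_iff_baireMeasurableSet]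
  exact ⟨I, A, hinj, hcard, hluzin, fun i x => himage i (.addRight x), hind⟩
end

section
/- Let T ⊆ ℝ be a nonmeager set such that the symmetric difference (T + x) △ T is countable for every x ∈ ℝ. Then T ∩ B ≠ ∅ for every nonmeager set B ⊆ ℝ having the Baire property. -/
/-!
If `T ∩ B` is meager, then so is `T ∩ U` for a nonempty open set `U` that agrees with `B` up to a
meager set. Almost invariance of `T` carries this from `U` to each of its translates, and
countably many translates of `U` cover the whole space, so `T` would be meager.

For an action of a separable group with dense orbits, the countably many translates may be taken
along a countable dense subset of the group.
-/

open Set Topology TopologicalSpace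
open scoped Pointwise

section BaireCategory

variable {X : Type*} [TopologicalSpace X]

theorem isMeagre_of_countable_s7 [T1Space X] [∀ x : X, (𝓝[≠] x).NeBot] {s : Set X}
    (hs : s.Countable) : IsMeagre s := by
  rw [← biUnion_of_singleton s]
  refine isMeagre_biUnion hs fun x _ => IsNowhereDense.isMeagre ?_
  rw [IsNowhereDense, closure_singleton, interior_singleton]

theorem isMeagre_congr_of_residualEq {s t : Set X} (h : s =ᵇ t) : IsMeagre s ↔ IsMeagre t :=
  Filter.congr_sets (Filter.eventuallyEq_set.mp h.compl)

theorem symmDiff_residualEq_left {s m : Set X} (hm : IsMeagre m) :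
    (symmDiff s m : Set X) =ᵇ s := by
  have hm_empty : m =ᵇ (∅ : Set X) := Filter.eventuallyEq_empty.mpr hm
  exact (Filter.EventuallyEq.rfl.symmDiff hm_empty).trans (.of_eq (symmDiff_bot s))

theorem baireMeasurableSet_symmDiff_of_isOpen {u m : Set X} (hu : IsOpen u) (hm : IsMeagre m) :
    BaireMeasurableSet (symmDiff u m) :=
  hu.baireMeasurableSet.congr (symmDiff_residualEq_left hm).symm

end BaireCategory

section AddAction

variable {G X : Type*} [AddGroup G] [TopologicalSpace X] [AddAction G X]

theorem isMeagre_vadd_set [ContinuousConstVAdd G X] (g : G) {s : Set X} (hs : IsMeagre s) :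
    IsMeagre (g +ᵥ s) := by
  rw [← preimage_vadd_neg]
  exact hs.preimage_of_isOpenMap (continuous_const_vadd (-g)) (isOpenMap_vadd (-g))

theorem iUnion_neg_vadd_eq_univ_of_dense [TopologicalSpace G] [ContinuousVAdd G X]
    [AddAction.IsMinimal G X] {D : Set G} (hD : Dense D) {U : Set X} (hU : IsOpen U)
    (hne : U.Nonempty) : ⋃ d ∈ D, -d +ᵥ U = univ := by
  refine iUnion₂_eq_univ_iff.mpr fun x => ?_
  obtain ⟨d, hdU, hdD⟩ := hD.inter_open_nonempty ((· +ᵥ x) ⁻¹' U)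
    (hU.preimage (by fun_prop)) (hU.exists_vadd_mem G x hne)
  exact ⟨d, hdD, mem_neg_vadd_set_iff.mpr hdU⟩

theorem isMeagre_inter_vadd_set [ContinuousConstVAdd G X] {T U : Set X} {g : G}
    (hT : IsMeagre (T \ (g +ᵥ T))) (hTU : IsMeagre (T ∩ U)) : IsMeagre (T ∩ (g +ᵥ U)) := by
  refine (hT.union (isMeagre_vadd_set g hTU)).mono ?_
  rw [vadd_set_inter]
  rintro x ⟨hxT, hxU⟩
  by_cases hx : x ∈ g +ᵥ T
  · exact Or.inr ⟨hx, hxU⟩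
  · exact Or.inl ⟨hxT, hx⟩

variable [TopologicalSpace G] [SeparableSpace G] [ContinuousVAdd G X] [AddAction.IsMinimal G X]

theorem isMeagre_of_isMeagre_inter_isOpen {T U : Set X}
    (hT : ∀ g : G, IsMeagre (T \ (g +ᵥ T))) (hU : IsOpen U) (hne : U.Nonempty)
    (hTU : IsMeagre (T ∩ U)) : IsMeagre T := by
  obtain ⟨D, hD_countable, hD_dense⟩ := exists_countable_dense G
  rw [← inter_univ T, ← iUnion_neg_vadd_eq_univ_of_dense hD_dense hU hne, inter_iUnion₂]
  exact isMeagre_biUnion hD_countable fun d _ => isMeagre_inter_vadd_set (hT (-d)) hTU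

theorem nonmeager_almost_invariant_meets_baire_sets_general {T B : Set X} (hT : ¬IsMeagre T)
    (hinv : ∀ g : G, IsMeagre (T \ (g +ᵥ T))) (hB : BaireMeasurableSet B)
    (hB_nonmeagre : ¬IsMeagre B) : ¬IsMeagre (T ∩ B) := by
  obtain ⟨U, hU, hBU⟩ := hB.residualEq_isOpen
  rw [isMeagre_congr_of_residualEq hBU] at hB_nonmeagre
  rw [isMeagre_congr_of_residualEq ((Filter.EventuallyEq.refl _ T).inter hBU)]
  exact mt (isMeagre_of_isMeagre_inter_isOpen hinv hU (nonempty_of_not_isMeagre hB_nonmeagre)) hT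

end AddAction

theorem isMeagre_diff_vadd_set_of_countable_symmDiff {G : Type*} [AddCommGroup G]
    [TopologicalSpace G] [T1Space G] [∀ x : G, (𝓝[≠] x).NeBot] {T : Set G} {x : G}
    (h : (symmDiff ((fun t => t + x) '' T) T).Countable) : IsMeagre (T \ (x +ᵥ T)) := by
  have himage : (fun t => t + x) '' T = x +ᵥ T := image_congr fun t _ => add_comm t x
  rw [himage] at h
  exact isMeagre_of_countable_s7 (h.mono subset_union_right)

theorem nonmeager_almost_invariant_meets_baire_sets
    (T : Set ℝ) (hT : ¬IsMeagre T)
    (hsym : ∀ x : ℝ, (symmDiff ((fun t => t + x) '' T) T).Countable) :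
    ∀ B : Set ℝ,
      (∃ U M : Set ℝ, IsOpen U ∧ IsMeagre M ∧ B = symmDiff U M) →
      ¬IsMeagre B → (T ∩ B).Nonempty := by
  rintro _ ⟨U, M, hU, hM, rfl⟩ hB
  exact nonempty_of_not_isMeagre <| nonmeager_almost_invariant_meets_baire_sets_general hT
    (fun x => isMeagre_diff_vadd_set_of_countable_symmDiff (hsym x))
    (baireMeasurableSet_symmDiff_of_isOpen hU hM) hB
end

section
/- Let T ⊆ ℝ be a set that is not Lebesgue-null (i.e., T has positive Lebesgue outer measure) and such that the symmetric difference (T + x) △ T is countable for every x ∈ ℝ. Then T ∩ B ≠ ∅ for every Lebesgue measurable set B ⊆ ℝ of positive Lebesgue measure. -/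
/-!
Suppose `T ∩ B` is null and let `D` be a countable dense set of translations preserving `T` up to a
null set. Then `T` meets each translate `d + B`, `d ∈ D`, in a null set, hence also `D + B`. On the
other hand `D + B` is conull: by Steinhaus' theorem, the difference set of its complement and `B`
would otherwise have an interior point, hence contain an element of `D`. So `T` is null.
-/

open MeasureTheory
open scoped Pointwise Topology

section LeftInvariant

variable {G : Type*} [Group G] [MeasurableSpace G] [MeasurableMul₂ G] [MeasurableInv G]
  {μ : Measure G} [SFinite μ] [μ.IsMulLeftInvariant] {A B : Set G}

@[to_additive]
theorem exists_measure_inter_smul_ne_zero (hA : MeasurableSet A) (hB : MeasurableSet B)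
    (hμA : μ A ≠ 0) (hμB : μ B ≠ 0) : ∃ g : G, μ (A ∩ g • B) ≠ 0 := by
  by_contra! h
  have h_ae : ∀ᵐ g ∂μ, ∀ᵐ x ∂μ, ¬(x ∈ A ∧ g⁻¹ * x ∈ B) :=
    ae_of_all _ fun g ↦ measure_eq_zero_iff_ae_notMem.1 <| by
      simpa only [← Set.preimage_smul_inv] using! h g
  have h_meas : MeasurableSet {p : G × G | ¬(p.2 ∈ A ∧ p.1⁻¹ * p.2 ∈ B)} :=
    ((measurable_snd hA).inter ((measurable_fst.inv.mul measurable_snd) hB)).compl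
  obtain ⟨x, hxA, hx⟩ : ∃ x ∈ A, ∀ᵐ g ∂μ, ¬(x ∈ A ∧ g⁻¹ * x ∈ B) :=
    ((frequently_ae_mem_iff.2 hμA).and_eventually ((Measure.ae_ae_comm h_meas).1 h_ae)).exists
  refine hμB (measure_eq_zero_iff_ae_notMem.2 ?_)
  filter_upwards [(quasiMeasurePreserving_div_left μ x).ae hx] with y hy
  simpa [hxA] using hy

end LeftInvariant

section Haar

variable {G : Type*} [Group G] [TopologicalSpace G] [IsTopologicalGroup G] [LocallyCompactSpace G]
  [SecondCountableTopology G] [MeasurableSpace G] [BorelSpace G]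
  {μ : Measure G} [μ.IsHaarMeasure] {A B D : Set G}

@[to_additive]
theorem exists_div_mem_nhds_of_haar_ne_zero (hA : MeasurableSet A) (hB : MeasurableSet B)
    (hμA : μ A ≠ 0) (hμB : μ B ≠ 0) : ∃ g : G, A / B ∈ 𝓝 g := by
  obtain ⟨g, hg⟩ := exists_measure_inter_smul_ne_zero hA hB hμA hμB
  have h_steinhaus : (A ∩ g • B) / (A ∩ g • B) ∈ 𝓝 (1 : G) :=
    Measure.div_mem_nhds_one_of_haar_pos μ _ (hA.inter (hB.const_smul g)) (pos_iff_ne_zero.2 hg)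
  refine ⟨g, Filter.mem_of_superset (mul_singleton_mem_nhds_of_nhds_one g h_steinhaus) ?_⟩
  rintro _ ⟨_, ⟨a, ha, _, ⟨-, b, hb, rfl⟩, rfl⟩, _, rfl, rfl⟩
  exact ⟨a, ha.1, b, hb, by simp [div_eq_mul_inv, mul_assoc]⟩

@[to_additive]
theorem ae_mem_smul_of_countable_of_dense (hDc : D.Countable) (hD : Dense D)
    (hB : MeasurableSet B) (hμB : μ B ≠ 0) : ∀ᵐ x ∂μ, x ∈ D • B := by
  have h_meas : MeasurableSet (D • B) := by
    rw [← Set.iUnion_smul_set]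
    exact .biUnion hDc fun d _ ↦ hB.const_smul d
  change μ (D • B)ᶜ = 0
  by_contra h_compl
  obtain ⟨g, hg⟩ := exists_div_mem_nhds_of_haar_ne_zero h_meas.compl hB h_compl hμB
  obtain ⟨_, hd, x, hx, b, hb, rfl⟩ := hD.inter_nhds_nonempty hg
  exact hx ⟨x / b, hd, b, hb, div_mul_cancel x b⟩

end Haar

theorem nonnull_almost_invariant_meets_positive_measure_sets_general {G : Type*} [AddGroup G]
    [TopologicalSpace G] [IsTopologicalAddGroup G] [LocallyCompactSpace G]
    [SecondCountableTopology G] [MeasurableSpace G] [BorelSpace G] {μ : Measure G}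
    [μ.IsAddHaarMeasure] {T B : Set G} (hT : μ T ≠ 0)
    (hstab : Dense (AddAction.aestabilizer G μ T : Set G)) (hB : MeasurableSet B) (hμB : μ B ≠ 0) :
    μ (T ∩ B) ≠ 0 := by
  intro hTB
  obtain ⟨D, hD_sub, hDc, hD⟩ := hstab.exists_countable_dense_subset
  have h_translate (d) (hd : d ∈ D) : μ (T ∩ (d +ᵥ B)) = 0 := calc
    μ (T ∩ (d +ᵥ B)) = μ ((d +ᵥ T) ∩ (d +ᵥ B)) :=
      measure_congr ((AddAction.mem_aestabilizer.1 (hD_sub hd)).symm.inter (ae_eq_refl _))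
    _ = μ (T ∩ B) := by rw [← Set.vadd_set_inter, measure_vadd]
    _ = 0 := hTB
  have h_saturation : μ (T ∩ (D +ᵥ B)) = 0 := by
    rw [← Set.iUnion_vadd_set, Set.inter_iUnion₂]
    exact (measure_biUnion_null_iff hDc).2 h_translate
  refine hT ?_
  rwa [← measure_inter_conull (ae_mem_vadd_of_countable_of_dense hDc hD hB hμB)]

theorem nonnull_almost_invariant_meets_positive_measure_sets
    (T : Set ℝ) (hT : volume T ≠ 0)
    (hsym : ∀ x : ℝ, (symmDiff ((fun t => t + x) '' T) T).Countable) :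
    ∀ B : Set ℝ, MeasurableSet B → 0 < volume B → (T ∩ B).Nonempty := by
  intro B hB hμB
  have hstab (x : ℝ) : x ∈ AddAction.aestabilizer ℝ volume T :=
    measure_symmDiff_eq_zero_iff.1 <| by
      simpa only [← Set.image_vadd, vadd_eq_add, add_comm x] using (hsym x).measure_zero volume
  exact nonempty_of_measure_ne_zero <|
    nonnull_almost_invariant_meets_positive_measure_sets_general hT
      (dense_univ.mono fun x _ ↦ hstab x) hB hμB.ne'
end

section
/- Assume the continuum hypothesis (2^ℵ₀ = ℵ₁). Then there exists a set A ⊆ ℝ of positive Lebesgue outer measure such that A ∩ N is countable for every Lebesgue-null set N ⊆ ℝ (so A is a Sierpiński set) and the symmetric difference (A + x) △ A is countable for every x ∈ ℝ. -/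
open MeasureTheory

/-!
Under the continuum hypothesis the pairs `(N, x)` of a measurable null set and a point can be
ordered so that every initial segment is countable. Let `H j` be the countable subgroup generated
by the points occurring up to stage `j`. The translates that put some element of `H j` into one of
the countably many null sets of stages up to `j` form a null set, so some coset `a j + H j` avoids
all these null sets. The union of the cosets `a j + H j` meets each null set only in cosets of
earlier stages, hence countably often. A translation by `x` fixes each coset `a j + H j` with
`x ∈ H j`, which is all but countably many of them.
-/

open Set Cardinal
open scoped Pointwise symmDiff

universe u v

theorem continuum_eq_aleph_one_of_two_power_aleph0_eq (CH : (2 : Cardinal.{v}) ^ ℵ₀ = ℵ₁) :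
    (𝔠 : Cardinal.{u}) = ℵ₁ := by
  rw [two_power_aleph0] at CH
  rw [← lift_eq_aleph_one.{u, v}, lift_continuum, ← lift_continuum.{u, v}, CH, lift_aleph]
  simp

theorem exists_linearOrder_countable_Iic {J : Type*} (hJ : #J ≤ ℵ₁) :
    ∃ _ : LinearOrder J, ∀ j : J, (Iic j).Countable := by
  obtain ⟨_, _, hord⟩ := exists_ord_eq_type_lt J
  refine ⟨inferInstance, fun j => ?_⟩
  have hIio : (Iio j).Countable :=
    le_aleph0_iff_set_countable.1 <| lt_aleph_one_iff.1 <| (mk_Iio_lt j hord).trans_le hJ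
  rw [← Iio_insert]
  exact hIio.insert j

theorem mk_measurableSet_le_continuum (α : Type*) [MeasurableSpace α]
    [MeasurableSpace.CountablyGenerated α] : #{s : Set α | MeasurableSet s} ≤ 𝔠 := by
  obtain ⟨b, hb, rfl⟩ := ‹MeasurableSpace.CountablyGenerated α›.isCountablyGenerated
  exact MeasurableSpace.cardinal_measurableSet_le_continuum
    (hb.le_aleph0.trans aleph0_le_continuum)

theorem mk_le_continuum_of_countablySeparated (α : Type*) [MeasurableSpace α]
    [MeasurableSpace.CountablySeparated α] : #α ≤ 𝔠 := by
  obtain ⟨f, -, hf⟩ := MeasurableSpace.measurable_injection_nat_bool_of_countablySeparated α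
  simpa using mk_le_of_injective (Equiv.ulift.symm.injective.comp hf)

theorem mk_measurable_null_prod_le_continuum {α : Type*} [MeasurableSpace α]
    [MeasurableSpace.CountablyGenerated α] [MeasurableSpace.SeparatesPoints α] (μ : Measure α) :
    #({N : Set α | MeasurableSet N ∧ μ N = 0} × α) ≤ 𝔠 := by
  rw [mk_prod, lift_id, lift_id, ← continuum_mul_self]
  gcongr
  · exact (mk_le_mk_of_subset fun N hN => hN.1).trans (mk_measurableSet_le_continuum α)
  · exact mk_le_continuum_of_countablySeparated α

theorem countable_addSubgroup_closure {G : Type*} [AddGroup G] {s : Set G} (hs : s.Countable) :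
    (AddSubgroup.closure s : Set G).Countable := by
  have := hs.to_subtype
  rw [FreeAddGroup.closure_eq_range]
  exact countable_range _

theorem symmDiff_image_union_subset {α : Type*} {f : α → α} {s t : Set α} (ht : f '' t = t) :
    (f '' (s ∪ t)) ∆ (s ∪ t) ⊆ f '' s ∪ s := by
  rw [image_union, ht]
  intro y
  simp only [mem_symmDiff, mem_union]
  tauto

section CosetUnion

variable {G J : Type*} [AddGroup G] {a : J → G} {H : J → AddSubgroup G} {S T : Set J}

/-- The union of the left cosets `a j + H j` over the indices `j ∈ S`. -/
def cosetUnion (a : J → G) (H : J → AddSubgroup G) (S : Set J) : Set G :=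
  ⋃ j ∈ S, a j +ᵥ (H j : Set G)

theorem cosetUnion_union : cosetUnion a H (S ∪ T) = cosetUnion a H S ∪ cosetUnion a H T :=
  biUnion_union S T _

theorem cosetUnion_nonempty (hS : S.Nonempty) : (cosetUnion a H S).Nonempty :=
  nonempty_biUnion.2 <| hS.imp fun j hj => ⟨hj, (ZeroMemClass.coe_nonempty (H j)).vadd_set⟩

theorem countable_cosetUnion (hS : S.Countable) (hH : ∀ j ∈ S, (H j : Set G).Countable) :
    (cosetUnion a H S).Countable :=
  hS.biUnion fun j hj => (hH j hj).image _

theorem image_add_right_cosetUnion {x : G} (hx : ∀ j ∈ S, x ∈ H j) :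
    (fun y => y + x) '' cosetUnion a H S = cosetUnion a H S := by
  simp only [cosetUnion, image_iUnion]
  refine iUnion₂_congr fun j hj => ?_
  ext y
  simp [mem_vadd_set_iff_neg_vadd_mem, ← add_assoc, (H j).add_mem_cancel_right, hx j hj]

variable [LinearOrder J]

theorem cosetUnion_univ_eq_Iio_union_Ici (j : J) :
    cosetUnion a H univ = cosetUnion a H (Iio j) ∪ cosetUnion a H (Ici j) := by
  rw [← cosetUnion_union, Iio_union_Ici]

theorem countable_cosetUnion_inter {N : Set G} {j : J} (hJ : (Iio j).Countable)
    (hH : ∀ i < j, (H i : Set G).Countable) (hN : Disjoint (cosetUnion a H (Ici j)) N) :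
    (cosetUnion a H univ ∩ N).Countable := by
  rw [cosetUnion_univ_eq_Iio_union_Ici j, union_inter_distrib_right, hN.inter_eq, union_empty]
  exact (countable_cosetUnion hJ hH).mono inter_subset_left

theorem countable_symmDiff_image_add_right_cosetUnion {x : G} {j : J} (hJ : (Iio j).Countable)
    (hH : ∀ i < j, (H i : Set G).Countable) (hx : ∀ i ≥ j, x ∈ H i) :
    (((fun y => y + x) '' cosetUnion a H univ) ∆ cosetUnion a H univ).Countable := by
  have hcount : (cosetUnion a H (Iio j)).Countable := countable_cosetUnion hJ hH
  rw [cosetUnion_univ_eq_Iio_union_Ici j]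
  exact ((hcount.image _).union hcount).mono
    (symmDiff_image_union_subset (image_add_right_cosetUnion hx))

end CosetUnion

section Measure

variable {G J : Type*} [AddGroup G] [MeasurableSpace G] [MeasurableAdd G]
  {μ : Measure G} [μ.IsAddRightInvariant] [NeZero μ]

theorem exists_disjoint_vadd_of_countable_of_null {S N : Set G} (hS : S.Countable)
    (hN : μ N = 0) : ∃ a : G, Disjoint (a +ᵥ S) N := by
  have hnull : μ (⋃ g ∈ S, (fun a => a + g) ⁻¹' N) = 0 :=
    (measure_biUnion_null_iff hS).2 fun g _ => by rwa [measure_preimage_add_right]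
  obtain ⟨a, ha⟩ := nonempty_compl.2 fun h =>
    NeZero.ne μ (Measure.measure_univ_eq_zero.1 (h ▸ hnull))
  refine ⟨a, disjoint_left.2 ?_⟩
  rintro _ ⟨g, hg, rfl⟩ hag
  exact ha (mem_biUnion hg hag)

theorem exists_forall_disjoint_cosetUnion_Ici [Preorder J] {N : J → Set G}
    {H : J → AddSubgroup G} (hJ : ∀ j : J, (Iic j).Countable) (hN : ∀ j, μ (N j) = 0)
    (hH : ∀ j, (H j : Set G).Countable) :
    ∃ a : J → G, ∀ j, Disjoint (cosetUnion a H (Ici j)) (N j) := by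
  have hnull (j : J) : μ (⋃ i ∈ Iic j, N i) = 0 :=
    (measure_biUnion_null_iff (hJ j)).2 fun i _ => hN i
  choose a ha using fun j => exists_disjoint_vadd_of_countable_of_null (hH j) (hnull j)
  refine ⟨a, fun j => disjoint_iUnion₂_left.2 fun i hi => ?_⟩
  exact (ha i).mono_right (subset_biUnion_of_mem (u := N) (mem_Iic.2 hi))

end Measure

theorem exists_nonnull_sierpinski_almost_translation_invariant_general {G : Type u} [AddGroup G]
    [MeasurableSpace G] [MeasurableAdd G] [MeasurableSpace.CountablyGenerated G]
    [MeasurableSpace.SeparatesPoints G] (μ : Measure G) [μ.IsAddRightInvariant] [NeZero μ]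
    [NullSingletonClass μ] (CH : (2 : Cardinal.{v}) ^ ℵ₀ = ℵ₁) :
    ∃ A : Set G, 0 < μ A ∧ ¬A.Countable ∧ (∀ N : Set G, μ N = 0 → (A ∩ N).Countable) ∧
      ∀ x : G, (symmDiff ((fun a => a + x) '' A) A).Countable := by
  let J := {N : Set G | MeasurableSet N ∧ μ N = 0} × G
  obtain ⟨_, hJ⟩ := exists_linearOrder_countable_Iic <|
    (mk_measurable_null_prod_le_continuum μ).trans_eq
      (continuum_eq_aleph_one_of_two_power_aleph0_eq CH)
  have hIio (j : J) : (Iio j).Countable := (hJ j).mono Iio_subset_Iic_self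
  let H (j : J) : AddSubgroup G := .closure (Prod.snd '' Iic j)
  have hH (j : J) : (H j : Set G).Countable := countable_addSubgroup_closure ((hJ j).image _)
  obtain ⟨a, ha⟩ := exists_forall_disjoint_cosetUnion_Ici hJ (fun j => j.1.2.2) hH
  have hdisj {N : Set G} (hN : μ N = 0) : ∃ j, Disjoint (cosetUnion a H (Ici j)) N :=
    ⟨(⟨toMeasurable μ N, measurableSet_toMeasurable μ N, by rwa [measure_toMeasurable]⟩, 0),
      (ha _).mono_right (subset_toMeasurable μ N)⟩
  have hpos : μ (cosetUnion a H univ) ≠ 0 := fun h => by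
    obtain ⟨j, hj⟩ := hdisj h
    exact (cosetUnion_nonempty nonempty_Ici).ne_empty
      (hj.eq_bot_of_le (biUnion_subset_biUnion_left (subset_univ _)))
  refine ⟨cosetUnion a H univ, pos_iff_ne_zero.2 hpos, fun h => hpos (h.measure_zero μ),
    fun N hN => ?_, fun x => ?_⟩
  · obtain ⟨j, hj⟩ := hdisj hN
    exact countable_cosetUnion_inter (hIio j) (fun i _ => hH i) hj
  · let j : J := (⟨∅, .empty, measure_empty⟩, x)
    exact countable_symmDiff_image_add_right_cosetUnion (hIio j) (fun i _ => hH i)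
      fun i hi => AddSubgroup.subset_closure ⟨j, hi, rfl⟩

theorem exists_nonnull_sierpinski_almost_translation_invariant
    (CH : (2 : Cardinal) ^ Cardinal.aleph0 = Cardinal.aleph 1) :
    ∃ A : Set ℝ, 0 < volume A ∧ ¬A.Countable ∧
      (∀ N : Set ℝ, volume N = 0 → (A ∩ N).Countable) ∧
      (∀ x : ℝ, (symmDiff ((fun a => a + x) '' A) A).Countable) :=
  exists_nonnull_sierpinski_almost_translation_invariant_general volume CH
end
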